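/- Correctness of memoized backtracking matching (Theorem 2): For every NFA A = (Q, q0, F, T) without ε-loops, every input string w over Σ, and every starting position i ∈ {0, …, |w|}, the memoized algorithm returns the same result as the original backtracking algorithm: Match_{A,w}(q0, i) = Memo^{M0}_{A,w}(q0, i). -/

import Mathlib

namespace RegexMemo

/-! ## Generic runs, `φ`, `sub`, `sub*` -/

variable {α : Type}

/-- `φ_s(ℓ, n)`: the index of the result value of the call at index `ℓ`. -/
def phiAux (isRet : α → Bool) (s : List α) (ℓ n : ℕ) : Option ℕ :=
  match h : s[ℓ]? with
  | none => none
  | some e =>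
    if isRet e then
      if n ≤ 1 then some ℓ
      else phiAux isRet s (ℓ + 1) (n - 1)
    else phiAux isRet s (ℓ + 1) (n + 1)
termination_by s.length - ℓ
decreasing_by
  all_goals
    have hl : ℓ < s.length := by
      by_contra hc
      have : s[ℓ]? = none := List.getElem?_eq_none (by omega)
      simp [this] at h
    omega

/-- `φ_s(ℓ) = φ_s(ℓ, 0)`. -/
def phi (isRet : α → Bool) (s : List α) (ℓ : ℕ) : Option ℕ := phiAux isRet s ℓ 0

/-- `sub(s, ℓ)`: replace the memoization-table invocation at index `ℓ` (an element
`M(q,i)` together with its immediately following result) by `C(q,i)` followed by the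
subsequence `s[ℓ'+1] … s[φ_s(ℓ')]`, where `ℓ'` is the first index with `s[ℓ'] = C(q,i)`.
Here `m2c` maps a memoization element `M(q,i)` to the corresponding call element `C(q,i)`
(and everything else to `none`), and `isRet` recognizes result elements. -/
def subExpand [DecidableEq α] (m2c : α → Option α) (isRet : α → Bool)
    (s : List α) (ℓ : ℕ) : Option (List α) :=
  match s[ℓ]? with
  | some e =>
    match m2c e with
    | some c =>
      match s.findIdx? (· == c) with
      | some ℓ' =>
        match phi isRet s ℓ' with
        | some m =>
          some (s.take ℓ ++ [c] ++ ((s.drop (ℓ' + 1)).take (m - ℓ')) ++ s.drop (ℓ + 2))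
        | none => none
      | none => none
    | none => none
  | none => none

/-- `sub*`: repeatedly locate the first memoization element and expand it,
until no memoization element remains. `SubStar m2c isRet s t` means `sub*(s) = t`. -/
inductive SubStar [DecidableEq α] (m2c : α → Option α) (isRet : α → Bool) :
    List α → List α → Prop where
  | done {s : List α} : s.findIdx? (fun e => (m2c e).isSome) = none →
      SubStar m2c isRet s s
  | step {s s' t : List α} {ℓ : ℕ} :
      s.findIdx? (fun e => (m2c e).isSome) = some ℓ →
      subExpand m2c isRet s ℓ = some s' →
      SubStar m2c isRet s' t →
      SubStar m2c isRet s t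

/-- The number of (recursive) calls recorded in a run: the number of `C`/`M` elements. -/
def callCount (isCall : α → Bool) (s : List α) : ℕ := (s.filter isCall).length

variable {Sigma S : Type}

/-- Results of backtracking matching: `SuccessAt i'` or `Failure`. -/
inductive Result : Type where
  | successAt : ℕ → Result
  | failure : Result
deriving DecidableEq

/-! ## Plain NFAs -/

/-- Transitions of a plain NFA. -/
inductive Trans (Sigma S : Type) : Type where
  | eps : S → Trans Sigma S
  | branch : S → S → Trans Sigma S
  | char : Sigma → S → Trans Sigma S

/-- A (plain) NFA over the alphabet `Sigma` with (finite) state type `S`: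
an initial state, a set of accepting states, and a transition function
(whose value is only relevant on non-accepting states). -/
structure NFA (Sigma S : Type) where
  q0 : S
  F : Set S
  T : S → Trans Sigma S

/-- One ε-step: an `Eps` or `Branch` transition of a non-accepting state. -/
def NFA.epsStep (A : NFA Sigma S) (q q' : S) : Prop :=
  q ∉ A.F ∧ (A.T q = Trans.eps q' ∨ (∃ q'', A.T q = Trans.branch q' q'') ∨
    (∃ q'', A.T q = Trans.branch q'' q'))

/-- The NFA has no ε-loops. -/
def NFA.NoEpsLoops (A : NFA Sigma S) : Prop :=
  ∀ q : S, ¬ Relation.TransGen A.epsStep q q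

open Classical in
/-- The in-degree `#in(q)` of a state of a plain NFA. -/
noncomputable def NFA.inDeg [Fintype S] (A : NFA Sigma S) (q : S) : ℕ :=
  (Finset.univ.filter fun q' : S => q' ∉ A.F ∧ A.T q' = Trans.eps q).card +
  (Finset.univ.filter fun q' : S => q' ∉ A.F ∧ ∃ σ, A.T q' = Trans.char σ q).card +
  (Finset.univ.filter fun q' : S => q' ∉ A.F ∧ ∃ q'', A.T q' = Trans.branch q q'').card +
  (Finset.univ.filter fun q' : S => q' ∉ A.F ∧ ∃ q'', A.T q' = Trans.branch q'' q).card +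
  (if q = A.q0 then 1 else 0)

/-- The maximal in-degree `#in(A)` of a plain NFA. -/
noncomputable def NFA.inDegMax [Fintype S] (A : NFA Sigma S) : ℕ :=
  Finset.univ.sup fun q : S => A.inDeg q

/-- Elements of runs of `Match`/`Memo`: calls `C(q,i)`, memoization-table invocations
`M(q,i)`, and results `S(i')` and `F`. -/
inductive RunElem (S : Type) : Type where
  | call : S → ℕ → RunElem S
  | memo : S → ℕ → RunElem S
  | succ : ℕ → RunElem S
  | fail : RunElem S
deriving DecidableEq

/-- The run element recording the return of a result. -/
def Result.elem {S : Type} : Result → RunElem S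
  | .successAt i => .succ i
  | .failure => .fail

def RunElem.isRet : RunElem S → Bool
  | .succ _ => true
  | .fail => true
  | _ => false

def RunElem.isCall : RunElem S → Bool
  | .call _ _ => true
  | .memo _ _ => true
  | _ => false

/-- `M(q,i) ↦ C(q,i)`. -/
def memoToCall : RunElem S → Option (RunElem S)
  | .memo q i => some (.call q i)
  | _ => none

/-- Big-step semantics (together with the produced run) of the backtracking
matching algorithm `Match` for plain NFAs:
`MatchRun A w q i r s` means the call `Match_{A,w}(q, i)` terminates with
result `r` and produces the run `s`. -/
inductive MatchRun (A : NFA Sigma S) (w : List Sigma) :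
    S → ℕ → Result → List (RunElem S) → Prop where
  | accept {q : S} {i : ℕ} : q ∈ A.F →
      MatchRun A w q i (.successAt i) [.call q i, .succ i]
  | eps {q q' : S} {i : ℕ} {r : Result} {s : List (RunElem S)} :
      q ∉ A.F → A.T q = Trans.eps q' →
      MatchRun A w q' i r s →
      MatchRun A w q i r (.call q i :: s ++ [r.elem])
  | branchSucc {q q' q'' : S} {i i' : ℕ} {s : List (RunElem S)} :
      q ∉ A.F → A.T q = Trans.branch q' q'' →
      MatchRun A w q' i (.successAt i') s →
      MatchRun A w q i (.successAt i') (.call q i :: s ++ [RunElem.succ i'])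
  | branchFail {q q' q'' : S} {i : ℕ} {r : Result} {s s' : List (RunElem S)} :
      q ∉ A.F → A.T q = Trans.branch q' q'' →
      MatchRun A w q' i .failure s →
      MatchRun A w q'' i r s' →
      MatchRun A w q i r (.call q i :: s ++ s' ++ [r.elem])
  | charSucc {q q' : S} {σ : Sigma} {i : ℕ} {r : Result} {s : List (RunElem S)} :
      q ∉ A.F → A.T q = Trans.char σ q' →
      w[i]? = some σ →
      MatchRun A w q' (i + 1) r s →
      MatchRun A w q i r (.call q i :: s ++ [r.elem])
  | charFail {q q' : S} {σ : Sigma} {i : ℕ} :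
      q ∉ A.F → A.T q = Trans.char σ q' →
      w[i]? ≠ some σ →
      MatchRun A w q i .failure [.call q i, .fail]

/-- Record `M(q,i) := Failure` in the memoization table if the result is a failure. -/
def recFail [DecidableEq S] (M : S × ℕ → Bool) (q : S) (i : ℕ) : Result → (S × ℕ → Bool)
  | .failure => fun p => if p = (q, i) then true else M p
  | _ => M

/-- Big-step semantics (with resulting memoization table and produced run) of the
memoized backtracking matching algorithm `Memo` for plain NFAs:
`MemoRun A w q i M M' r s` means the call `Memo^M_{A,w}(q, i)` terminates with result
`r`, final memoization table `M'` (where `M p = true` means `Failure` is recorded at the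
key `p`), and produces the run `s`. -/
inductive MemoRun [DecidableEq S] (A : NFA Sigma S) (w : List Sigma) :
    S → ℕ → (S × ℕ → Bool) → (S × ℕ → Bool) → Result → List (RunElem S) → Prop where
  | memoHit {q : S} {i : ℕ} {M : S × ℕ → Bool} : M (q, i) = true →
      MemoRun A w q i M M .failure [.memo q i, .fail]
  | accept {q : S} {i : ℕ} {M : S × ℕ → Bool} : M (q, i) = false → q ∈ A.F →
      MemoRun A w q i M M (.successAt i) [.call q i, .succ i]
  | eps {q q' : S} {i : ℕ} {M M' : S × ℕ → Bool} {r : Result} {s : List (RunElem S)} :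
      M (q, i) = false → q ∉ A.F → A.T q = Trans.eps q' →
      MemoRun A w q' i M M' r s →
      MemoRun A w q i M (recFail M' q i r) r (.call q i :: s ++ [r.elem])
  | branchSucc {q q' q'' : S} {i i' : ℕ} {M M' : S × ℕ → Bool} {s : List (RunElem S)} :
      M (q, i) = false → q ∉ A.F → A.T q = Trans.branch q' q'' →
      MemoRun A w q' i M M' (.successAt i') s →
      MemoRun A w q i M M' (.successAt i') (.call q i :: s ++ [RunElem.succ i'])
  | branchFail {q q' q'' : S} {i : ℕ} {M M' M'' : S × ℕ → Bool} {r : Result}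
      {s s' : List (RunElem S)} :
      M (q, i) = false → q ∉ A.F → A.T q = Trans.branch q' q'' →
      MemoRun A w q' i M M' .failure s →
      MemoRun A w q'' i M' M'' r s' →
      MemoRun A w q i M (recFail M'' q i r) r (.call q i :: s ++ s' ++ [r.elem])
  | charSucc {q q' : S} {σ : Sigma} {i : ℕ} {M M' : S × ℕ → Bool} {r : Result}
      {s : List (RunElem S)} :
      M (q, i) = false → q ∉ A.F → A.T q = Trans.char σ q' →
      w[i]? = some σ →
      MemoRun A w q' (i + 1) M M' r s →
      MemoRun A w q i M (recFail M' q i r) r (.call q i :: s ++ [r.elem])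
  | charFail {q q' : S} {σ : Sigma} {i : ℕ} {M : S × ℕ → Bool} :
      M (q, i) = false → q ∉ A.F → A.T q = Trans.char σ q' →
      w[i]? ≠ some σ →
      MemoRun A w q i M (recFail M q i .failure) .failure [.call q i, .fail]

/-! ## NFAs with sub-automata -/

/-- Kind labels of sub-automaton transitions: positive/negative look-ahead/look-behind
and atomic grouping. -/
inductive Kind : Type where
  | pla | nla | plb | nlb | at
deriving DecidableEq

mutual
/-- An NFA with sub-automata `⟨Q, q0, F, T⟩`: a list of top-level states, an initial
state, accepting states, and a transition function (relevant on non-accepting top-level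
states) whose transitions may be labelled with further NFAs with sub-automata. -/
inductive SubNFA (Sigma S : Type) : Type where
  | mk : List S → S → List S → (S → SubTrans Sigma S) → SubNFA Sigma S

/-- Transitions of an NFA with sub-automata. -/
inductive SubTrans (Sigma S : Type) : Type where
  | eps : S → SubTrans Sigma S
  | branch : S → S → SubTrans Sigma S
  | char : Sigma → S → SubTrans Sigma S
  | sub : Kind → SubNFA Sigma S → S → SubTrans Sigma S
end

/-- Top-level states `Q`. -/
def SubNFA.Q : SubNFA Sigma S → List S
  | .mk Q _ _ _ => Q

/-- Initial state `q0`. -/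
def SubNFA.q0 : SubNFA Sigma S → S
  | .mk _ q0 _ _ => q0

/-- Accepting states `F`. -/
def SubNFA.F : SubNFA Sigma S → List S
  | .mk _ _ F _ => F

/-- Transition function `T`. -/
def SubNFA.T : SubNFA Sigma S → S → SubTrans Sigma S
  | .mk _ _ _ T => T

mutual
/-- All automata occurring within an NFA with sub-automata (including itself), each
together with its nesting depth of atomic grouping (the number of enclosing
`at`-sub-automaton boundaries). -/
def SubNFA.compsD : SubNFA Sigma S → List (SubNFA Sigma S × ℕ)
  | .mk Q q0 F T => (.mk Q q0 F T, 0) :: Q.flatMap (fun q => SubTrans.subCompsD (T q))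

def SubTrans.subCompsD : SubTrans Sigma S → List (SubNFA Sigma S × ℕ)
  | .sub k A' _ => (SubNFA.compsD A').map (fun p => (p.1, p.2 + (if k = Kind.at then 1 else 0)))
  | _ => []
end

/-- All automata occurring within `A` (including `A` itself). -/
def SubNFA.comps (A : SubNFA Sigma S) : List (SubNFA Sigma S) :=
  A.compsD.map Prod.fst

/-- The set (list) of all states `P` occurring within `A`. -/
def SubNFA.allStates (A : SubNFA Sigma S) : List S :=
  A.comps.flatMap SubNFA.Q

/-- The nesting depth of atomic grouping `ν_A(q)` of a state `q` of `A`. -/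
def SubNFA.nu [DecidableEq S] (A : SubNFA Sigma S) (q : S) : ℕ :=
  (A.compsD.map (fun p => if q ∈ p.1.Q then p.2 else 0)).sum

/-- The maximal nesting depth of atomic grouping `ν(A)`. -/
def SubNFA.nuMax [DecidableEq S] (A : SubNFA Sigma S) : ℕ :=
  (A.allStates.map A.nu).foldr max 0

/-- Local wellformedness of one automaton: the initial state is a top-level state,
accepting states are top-level states, and transitions of non-accepting top-level
states lead to top-level states. -/
def SubNFA.LocalOK (B : SubNFA Sigma S) : Prop :=
  B.q0 ∈ B.Q ∧ (∀ f ∈ B.F, f ∈ B.Q) ∧ ∀ q ∈ B.Q, q ∉ B.F →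
    match B.T q with
    | .eps q' => q' ∈ B.Q
    | .branch q' q'' => q' ∈ B.Q ∧ q'' ∈ B.Q
    | .char _ q' => q' ∈ B.Q
    | .sub _ _ q' => q' ∈ B.Q

/-- Wellformedness of an NFA with sub-automata: every component automaton is locally
wellformed, and all the state lists are disjoint and duplicate-free (so that `P` is
the disjoint union of the top-level state sets of all components). -/
def SubNFA.WF (A : SubNFA Sigma S) : Prop :=
  (∀ B ∈ A.comps, B.LocalOK) ∧ A.allStates.Nodup

/-- The kind labels of all sub-automaton transitions occurring in `A`. -/
def SubNFA.kinds [DecidableEq S] (A : SubNFA Sigma S) : List Kind :=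
  A.comps.flatMap fun B =>
    (B.Q.filter (fun q => decide (q ∉ B.F))).filterMap fun q =>
      match B.T q with
      | .sub k _ _ => some k
      | _ => none

/-- A la-NFA: all kind labels are look-around labels (for simplicity, only positive
look-ahead `pla` is treated). -/
def SubNFA.IsLaNFA [DecidableEq S] (A : SubNFA Sigma S) : Prop :=
  ∀ k ∈ A.kinds, k = Kind.pla

/-- An at-NFA: all kind labels are `at` (atomic grouping). -/
def SubNFA.IsAtNFA [DecidableEq S] (A : SubNFA Sigma S) : Prop :=
  ∀ k ∈ A.kinds, k = Kind.at

/-- A (la,at)-NFA in which (for simplicity) only the kinds `pla` and `at` occur. -/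
def SubNFA.IsLaAtNFA [DecidableEq S] (A : SubNFA Sigma S) : Prop :=
  ∀ k ∈ A.kinds, k = Kind.pla ∨ k = Kind.at

/-- One global ε-step of an NFA with sub-automata: an `Eps` or `Branch` transition, or a
`Sub` transition with a look-around kind (from the transition's source to its successor),
of a non-accepting top-level state of any component automaton. -/
def SubNFA.epsStep (A : SubNFA Sigma S) (q q' : S) : Prop :=
  ∃ B ∈ A.comps, q ∈ B.Q ∧ q ∉ B.F ∧
    (B.T q = SubTrans.eps q' ∨
     (∃ q'', B.T q = SubTrans.branch q' q'') ∨
     (∃ q'', B.T q = SubTrans.branch q'' q') ∨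
     (∃ k A'', B.T q = SubTrans.sub k A'' q' ∧ k ≠ Kind.at))

/-- The NFA with sub-automata has no ε-loops. -/
def SubNFA.NoEpsLoops (A : SubNFA Sigma S) : Prop :=
  ∀ q : S, ¬ Relation.TransGen A.epsStep q q

/-- All pairs (state, transition) of non-accepting top-level states of all component
automata of `A`. -/
def SubNFA.allTransNF [DecidableEq S] (A : SubNFA Sigma S) : List (S × SubTrans Sigma S) :=
  A.comps.flatMap fun B => (B.Q.filter (fun q => decide (q ∉ B.F))).map fun q => (q, B.T q)

/-- How many of the buckets in the definition of the in-degree of `q` a given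
transition contributes to. -/
def SubTrans.hits [DecidableEq S] (t : SubTrans Sigma S) (q : S) : ℕ :=
  match t with
  | .eps q' => if q' = q then 1 else 0
  | .char _ q' => if q' = q then 1 else 0
  | .branch q' q'' => (if q' = q then 1 else 0) + (if q'' = q then 1 else 0)
  | .sub _ _ q' => if q' = q then 1 else 0

/-- The in-degree `#in(q)` of a state of an NFA with sub-automata. -/
def SubNFA.inDeg [DecidableEq S] (A : SubNFA Sigma S) (q : S) : ℕ :=
  (A.allTransNF.map (fun p => p.2.hits q)).sum +
  (if q ∈ A.comps.map SubNFA.q0 then 1 else 0)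

/-- The maximal in-degree `#in(A)`. -/
def SubNFA.inDegMax [DecidableEq S] (A : SubNFA Sigma S) : ℕ :=
  (A.allStates.map A.inDeg).foldr max 0

/-! ## run elements for `Memo-la` and `Match-(la,at)` -/

/-- Elements of runs of `Memo-la` (and of `Match-(la,at)`): calls `C(q,i)`,
memoization-table invocations `M(q,i)`, and the results `S(i')`, `S'` (bare success),
and `F`. -/
inductive LaRunElem (S : Type) : Type where
  | call : S → ℕ → LaRunElem S
  | memo : S → ℕ → LaRunElem S
  | succAt : ℕ → LaRunElem S
  | succ : LaRunElem S
  | fail : LaRunElem S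
deriving DecidableEq

def LaRunElem.isRet : LaRunElem S → Bool
  | .succAt _ => true
  | .succ => true
  | .fail => true
  | _ => false

def LaRunElem.isCall : LaRunElem S → Bool
  | .call _ _ => true
  | .memo _ _ => true
  | _ => false

def laMemoToCall : LaRunElem S → Option (LaRunElem S)
  | .memo q i => some (.call q i)
  | _ => none

def Result.laElem {S : Type} : Result → LaRunElem S
  | .successAt i => .succAt i
  | .failure => .fail

/-! ## The backtracking matching algorithm `Match-(la,at)` -/

/-- Big-step semantics (with produced run) of the backtracking matching algorithm
`Match-(la,at)` for NFAs with sub-automata: `LAMatchRun w A q i r s` means the call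
`Match-(la,at)_{A,w}(q, i)` terminates with result `r` and produces the run `s`.
For simplicity, only the look-around kind `pla` (besides `at`) is treated. -/
inductive LAMatchRun (w : List Sigma) :
    SubNFA Sigma S → S → ℕ → Result → List (LaRunElem S) → Prop where
  | accept {A : SubNFA Sigma S} {q : S} {i : ℕ} : q ∈ A.F →
      LAMatchRun w A q i (.successAt i) [.call q i, .succAt i]
  | eps {A : SubNFA Sigma S} {q q' : S} {i : ℕ} {r : Result} {s : List (LaRunElem S)} :
      q ∉ A.F → A.T q = SubTrans.eps q' →
      LAMatchRun w A q' i r s →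
      LAMatchRun w A q i r (.call q i :: s ++ [r.laElem])
  | branchSucc {A : SubNFA Sigma S} {q q' q'' : S} {i i' : ℕ} {s : List (LaRunElem S)} :
      q ∉ A.F → A.T q = SubTrans.branch q' q'' →
      LAMatchRun w A q' i (.successAt i') s →
      LAMatchRun w A q i (.successAt i') (.call q i :: s ++ [LaRunElem.succAt i'])
  | branchFail {A : SubNFA Sigma S} {q q' q'' : S} {i : ℕ} {r : Result}
      {s s' : List (LaRunElem S)} :
      q ∉ A.F → A.T q = SubTrans.branch q' q'' →
      LAMatchRun w A q' i .failure s →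
      LAMatchRun w A q'' i r s' →
      LAMatchRun w A q i r (.call q i :: s ++ s' ++ [r.laElem])
  | charSucc {A : SubNFA Sigma S} {q q' : S} {σ : Sigma} {i : ℕ} {r : Result}
      {s : List (LaRunElem S)} :
      q ∉ A.F → A.T q = SubTrans.char σ q' →
      w[i]? = some σ →
      LAMatchRun w A q' (i + 1) r s →
      LAMatchRun w A q i r (.call q i :: s ++ [r.laElem])
  | charFail {A : SubNFA Sigma S} {q q' : S} {σ : Sigma} {i : ℕ} :
      q ∉ A.F → A.T q = SubTrans.char σ q' →
      w[i]? ≠ some σ →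
      LAMatchRun w A q i .failure [.call q i, .fail]
  | plaSucc {A A' : SubNFA Sigma S} {q q' : S} {i i' : ℕ} {r : Result}
      {s1 s2 : List (LaRunElem S)} :
      q ∉ A.F → A.T q = SubTrans.sub Kind.pla A' q' →
      LAMatchRun w A' A'.q0 i (.successAt i') s1 →
      LAMatchRun w A q' i r s2 →
      LAMatchRun w A q i r (.call q i :: s1 ++ s2 ++ [r.laElem])
  | plaFail {A A' : SubNFA Sigma S} {q q' : S} {i : ℕ} {s1 : List (LaRunElem S)} :
      q ∉ A.F → A.T q = SubTrans.sub Kind.pla A' q' →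
      LAMatchRun w A' A'.q0 i .failure s1 →
      LAMatchRun w A q i .failure (.call q i :: s1 ++ [LaRunElem.fail])
  | atSucc {A A' : SubNFA Sigma S} {q q' : S} {i i' : ℕ} {r : Result}
      {s1 s2 : List (LaRunElem S)} :
      q ∉ A.F → A.T q = SubTrans.sub Kind.at A' q' →
      LAMatchRun w A' A'.q0 i (.successAt i') s1 →
      LAMatchRun w A q' i' r s2 →
      LAMatchRun w A q i r (.call q i :: s1 ++ s2 ++ [r.laElem])
  | atFail {A A' : SubNFA Sigma S} {q q' : S} {i : ℕ} {s1 : List (LaRunElem S)} :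
      q ∉ A.F → A.T q = SubTrans.sub Kind.at A' q' →
      LAMatchRun w A' A'.q0 i .failure s1 →
      LAMatchRun w A q i .failure (.call q i :: s1 ++ [LaRunElem.fail])

/-! ## `Memo-la` -/

/-- Values of the memoization table of `Memo-la`: `Failure` or `Success`. -/
inductive LaVal : Type where
  | success : LaVal
  | failure : LaVal
deriving DecidableEq

/-- Results of `Memo-la`: `SuccessAt i'`, bare `Success`, or `Failure`. -/
inductive LaResult : Type where
  | successAt : ℕ → LaResult
  | success : LaResult
  | failure : LaResult
deriving DecidableEq

def LaVal.toResult : LaVal → LaResult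
  | .success => .success
  | .failure => .failure

def LaResult.elem {S : Type} : LaResult → LaRunElem S
  | .successAt i => .succAt i
  | .success => .succ
  | .failure => .fail

def Result.toLa : Result → LaResult
  | .successAt i => .successAt i
  | .failure => .failure

/-- The final recording of `Memo-la`: `M(q,i) := Success` if the result is
`SuccessAt i'` or `Success`, and `M(q,i) := Failure` if the result is `Failure`. -/
def laRecord [DecidableEq S] (M : S × ℕ → Option LaVal) (q : S) (i : ℕ) (r : LaResult) :
    S × ℕ → Option LaVal :=
  fun p => if p = (q, i) then
    some (match r with | .failure => LaVal.failure | _ => LaVal.success)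
  else M p

/-- Big-step semantics (with resulting memoization table and produced run) of the
memoized backtracking matching algorithm `Memo-la` for la-NFAs:
`MemoLaRun w A q i M M' r s` means the call `Memo-la^M_{A,w}(q, i)` terminates with
result `r`, final memoization table `M'`, and produces the run `s`. The memoization
table is shared between the top-level automaton and all sub-automata. -/
inductive MemoLaRun [DecidableEq S] (w : List Sigma) :
    SubNFA Sigma S → S → ℕ → (S × ℕ → Option LaVal) → (S × ℕ → Option LaVal) →
    LaResult → List (LaRunElem S) → Prop where
  | memoHit {A : SubNFA Sigma S} {q : S} {i : ℕ} {M : S × ℕ → Option LaVal} {v : LaVal} :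
      M (q, i) = some v →
      MemoLaRun w A q i M M v.toResult [.memo q i, v.toResult.elem]
  | accept {A : SubNFA Sigma S} {q : S} {i : ℕ} {M : S × ℕ → Option LaVal} :
      M (q, i) = none → q ∈ A.F →
      MemoLaRun w A q i M (laRecord M q i (.successAt i)) (.successAt i)
        [.call q i, .succAt i]
  | eps {A : SubNFA Sigma S} {q q' : S} {i : ℕ} {M M' : S × ℕ → Option LaVal}
      {r : LaResult} {s : List (LaRunElem S)} :
      M (q, i) = none → q ∉ A.F → A.T q = SubTrans.eps q' →
      MemoLaRun w A q' i M M' r s →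
      MemoLaRun w A q i M (laRecord M' q i r) r (.call q i :: s ++ [r.elem])
  | branchNoFail {A : SubNFA Sigma S} {q q' q'' : S} {i : ℕ}
      {M M' : S × ℕ → Option LaVal} {r : LaResult} {s : List (LaRunElem S)} :
      M (q, i) = none → q ∉ A.F → A.T q = SubTrans.branch q' q'' →
      MemoLaRun w A q' i M M' r s → r ≠ .failure →
      MemoLaRun w A q i M (laRecord M' q i r) r (.call q i :: s ++ [r.elem])
  | branchFail {A : SubNFA Sigma S} {q q' q'' : S} {i : ℕ}
      {M M1 M2 : S × ℕ → Option LaVal} {r : LaResult} {s1 s2 : List (LaRunElem S)} :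
      M (q, i) = none → q ∉ A.F → A.T q = SubTrans.branch q' q'' →
      MemoLaRun w A q' i M M1 .failure s1 →
      MemoLaRun w A q'' i M1 M2 r s2 →
      MemoLaRun w A q i M (laRecord M2 q i r) r (.call q i :: s1 ++ s2 ++ [r.elem])
  | charSucc {A : SubNFA Sigma S} {q q' : S} {σ : Sigma} {i : ℕ}
      {M M' : S × ℕ → Option LaVal} {r : LaResult} {s : List (LaRunElem S)} :
      M (q, i) = none → q ∉ A.F → A.T q = SubTrans.char σ q' →
      w[i]? = some σ →
      MemoLaRun w A q' (i + 1) M M' r s →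
      MemoLaRun w A q i M (laRecord M' q i r) r (.call q i :: s ++ [r.elem])
  | charFail {A : SubNFA Sigma S} {q q' : S} {σ : Sigma} {i : ℕ}
      {M : S × ℕ → Option LaVal} :
      M (q, i) = none → q ∉ A.F → A.T q = SubTrans.char σ q' →
      w[i]? ≠ some σ →
      MemoLaRun w A q i M (laRecord M q i .failure) .failure [.call q i, .fail]
  | plaSucc {A A' : SubNFA Sigma S} {q q' : S} {i : ℕ}
      {M M1 M2 : S × ℕ → Option LaVal} {r1 r : LaResult} {s1 s2 : List (LaRunElem S)} :
      M (q, i) = none → q ∉ A.F → A.T q = SubTrans.sub Kind.pla A' q' →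
      MemoLaRun w A' A'.q0 i M M1 r1 s1 → r1 ≠ .failure →
      MemoLaRun w A q' i M1 M2 r s2 →
      MemoLaRun w A q i M (laRecord M2 q i r) r (.call q i :: s1 ++ s2 ++ [r.elem])
  | plaFail {A A' : SubNFA Sigma S} {q q' : S} {i : ℕ}
      {M M1 : S × ℕ → Option LaVal} {s1 : List (LaRunElem S)} :
      M (q, i) = none → q ∉ A.F → A.T q = SubTrans.sub Kind.pla A' q' →
      MemoLaRun w A' A'.q0 i M M1 .failure s1 →
      MemoLaRun w A q i M (laRecord M1 q i .failure) .failure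
        (.call q i :: s1 ++ [LaRunElem.fail])

/-! ## `Memo-at` -/

/-- Results of `Memo-at`: `SuccessAt(i', K)` with a set `K` of delayed memoization keys,
or `Failure(j)` with a nesting depth `j`. -/
inductive AtResult (S : Type) : Type where
  | successAt : ℕ → Finset (S × ℕ) → AtResult S
  | failure : ℕ → AtResult S

/-- Elements of runs of `Memo-at`: calls `C(q,i)`, memoization-table invocations
`M(q,i)`, and results `S(i')` and `F(j)`. -/
inductive AtRunElem (S : Type) : Type where
  | call : S → ℕ → AtRunElem S
  | memo : S → ℕ → AtRunElem S
  | succ : ℕ → AtRunElem S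
  | fail : ℕ → AtRunElem S
deriving DecidableEq

def AtRunElem.isRet : AtRunElem S → Bool
  | .succ _ => true
  | .fail _ => true
  | _ => false

def AtRunElem.isCall : AtRunElem S → Bool
  | .call _ _ => true
  | .memo _ _ => true
  | _ => false

def atMemoToCall : AtRunElem S → Option (AtRunElem S)
  | .memo q i => some (.call q i)
  | _ => none

def AtResult.elem {S : Type} : AtResult S → AtRunElem S
  | .successAt i _ => .succ i
  | .failure j => .fail j

/-- `f`, converting results of `Memo-at` to results of `Match-(la,at)`. -/
def AtResult.toResult {S : Type} : AtResult S → Result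
  | .successAt i _ => .successAt i
  | .failure _ => .failure

/-- The final step of `Memo-at`: on success, the key `(q,i)` is added to the set of
delayed keys. -/
def atFinal [DecidableEq S] (q : S) (i : ℕ) : AtResult S → AtResult S
  | .successAt i' K => .successAt i' (insert (q, i) K)
  | .failure j => .failure j

/-- The final recording of `Memo-at`: `M(q,i) := Failure(j)` if the result is
`Failure(j)`. -/
def atRecord [DecidableEq S] (M : S × ℕ → Option ℕ) (q : S) (i : ℕ) :
    AtResult S → (S × ℕ → Option ℕ)
  | .failure j => fun p => if p = (q, i) then some j else M p
  | _ => M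

/-- Batch recording `M(k) := Failure(j)` for every `k ∈ K`. -/
def atBatch [DecidableEq S] (M : S × ℕ → Option ℕ) (K : Finset (S × ℕ)) (j : ℕ) :
    S × ℕ → Option ℕ :=
  fun p => if p ∈ K then some j else M p

/-- Big-step semantics (with resulting memoization table and produced run) of the
memoized backtracking matching algorithm `Memo-at` for at-NFAs:
`MemoAtRun A0 w A q i M M' r s` means the call `Memo-at^M_{A0,A,w}(q, i)` (with the
whole automaton `A0` and current sub-automaton `A`) terminates with result `r`, final
memoization table `M'`, and produces the run `s`. -/
inductive MemoAtRun [DecidableEq S] (A0 : SubNFA Sigma S) (w : List Sigma) :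
    SubNFA Sigma S → S → ℕ → (S × ℕ → Option ℕ) → (S × ℕ → Option ℕ) →
    AtResult S → List (AtRunElem S) → Prop where
  | memoHit {A : SubNFA Sigma S} {q : S} {i j : ℕ} {M : S × ℕ → Option ℕ} :
      M (q, i) = some j →
      MemoAtRun A0 w A q i M M (.failure j) [.memo q i, .fail j]
  | accept {A : SubNFA Sigma S} {q : S} {i : ℕ} {M : S × ℕ → Option ℕ} :
      M (q, i) = none → q ∈ A.F →
      MemoAtRun A0 w A q i M M (.successAt i {(q, i)}) [.call q i, .succ i]
  | eps {A : SubNFA Sigma S} {q q' : S} {i : ℕ} {M M' : S × ℕ → Option ℕ}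
      {r : AtResult S} {s : List (AtRunElem S)} :
      M (q, i) = none → q ∉ A.F → A.T q = SubTrans.eps q' →
      MemoAtRun A0 w A q' i M M' r s →
      MemoAtRun A0 w A q i M (atRecord M' q i r) (atFinal q i r)
        (.call q i :: s ++ [r.elem])
  | branchNoBT {A : SubNFA Sigma S} {q q' q'' : S} {i : ℕ} {M M' : S × ℕ → Option ℕ}
      {r : AtResult S} {s : List (AtRunElem S)} :
      M (q, i) = none → q ∉ A.F → A.T q = SubTrans.branch q' q'' →
      MemoAtRun A0 w A q' i M M' r s →
      (∀ j, r = AtResult.failure j → j ≠ A0.nu q) →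
      MemoAtRun A0 w A q i M (atRecord M' q i r) (atFinal q i r)
        (.call q i :: s ++ [r.elem])
  | branchBTSucc {A : SubNFA Sigma S} {q q' q'' : S} {i i'' : ℕ} {K : Finset (S × ℕ)}
      {M M1 M2 : S × ℕ → Option ℕ} {s1 s2 : List (AtRunElem S)} :
      M (q, i) = none → q ∉ A.F → A.T q = SubTrans.branch q' q'' →
      MemoAtRun A0 w A q' i M M1 (.failure (A0.nu q)) s1 →
      MemoAtRun A0 w A q'' i M1 M2 (.successAt i'' K) s2 →
      MemoAtRun A0 w A q i M M2 (atFinal q i (.successAt i'' K))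
        (.call q i :: s1 ++ s2 ++ [AtRunElem.succ i''])
  | branchBTFail {A : SubNFA Sigma S} {q q' q'' : S} {i j' : ℕ}
      {M M1 M2 : S × ℕ → Option ℕ} {s1 s2 : List (AtRunElem S)} :
      M (q, i) = none → q ∉ A.F → A.T q = SubTrans.branch q' q'' →
      MemoAtRun A0 w A q' i M M1 (.failure (A0.nu q)) s1 →
      MemoAtRun A0 w A q'' i M1 M2 (.failure j') s2 →
      MemoAtRun A0 w A q i M (atRecord M2 q i (.failure (min (A0.nu q) j')))
        (.failure (min (A0.nu q) j'))
        (.call q i :: s1 ++ s2 ++ [AtRunElem.fail (min (A0.nu q) j')])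
  | charSucc {A : SubNFA Sigma S} {q q' : S} {σ : Sigma} {i : ℕ}
      {M M' : S × ℕ → Option ℕ} {r : AtResult S} {s : List (AtRunElem S)} :
      M (q, i) = none → q ∉ A.F → A.T q = SubTrans.char σ q' →
      w[i]? = some σ →
      MemoAtRun A0 w A q' (i + 1) M M' r s →
      MemoAtRun A0 w A q i M (atRecord M' q i r) (atFinal q i r)
        (.call q i :: s ++ [r.elem])
  | charFail {A : SubNFA Sigma S} {q q' : S} {σ : Sigma} {i : ℕ}
      {M : S × ℕ → Option ℕ} :
      M (q, i) = none → q ∉ A.F → A.T q = SubTrans.char σ q' →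
      w[i]? ≠ some σ →
      MemoAtRun A0 w A q i M (atRecord M q i (.failure (A0.nu q)))
        (.failure (A0.nu q)) [.call q i, .fail (A0.nu q)]
  | subSuccSucc {A A' : SubNFA Sigma S} {q q' : S} {i i' i'' : ℕ}
      {K' K'' : Finset (S × ℕ)} {M M1 M2 : S × ℕ → Option ℕ}
      {s1 s2 : List (AtRunElem S)} :
      M (q, i) = none → q ∉ A.F → A.T q = SubTrans.sub Kind.at A' q' →
      MemoAtRun A0 w A' A'.q0 i M M1 (.successAt i' K') s1 →
      MemoAtRun A0 w A q' i' M1 M2 (.successAt i'' K'') s2 →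
      MemoAtRun A0 w A q i M M2 (atFinal q i (.successAt i'' (K' ∪ K'')))
        (.call q i :: s1 ++ s2 ++ [AtRunElem.succ i''])
  | subSuccFail {A A' : SubNFA Sigma S} {q q' : S} {i i' j : ℕ} {K' : Finset (S × ℕ)}
      {M M1 M2 : S × ℕ → Option ℕ} {s1 s2 : List (AtRunElem S)} :
      M (q, i) = none → q ∉ A.F → A.T q = SubTrans.sub Kind.at A' q' →
      MemoAtRun A0 w A' A'.q0 i M M1 (.successAt i' K') s1 →
      MemoAtRun A0 w A q' i' M1 M2 (.failure j) s2 →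
      MemoAtRun A0 w A q i M (atRecord (atBatch M2 K' j) q i (.failure j)) (.failure j)
        (.call q i :: s1 ++ s2 ++ [AtRunElem.fail j])
  | subFailHigh {A A' : SubNFA Sigma S} {q q' : S} {i j : ℕ}
      {M M1 : S × ℕ → Option ℕ} {s1 : List (AtRunElem S)} :
      M (q, i) = none → q ∉ A.F → A.T q = SubTrans.sub Kind.at A' q' →
      MemoAtRun A0 w A' A'.q0 i M M1 (.failure j) s1 →
      A0.nu q < j →
      MemoAtRun A0 w A q i M (atRecord M1 q i (.failure (A0.nu q)))
        (.failure (A0.nu q)) (.call q i :: s1 ++ [AtRunElem.fail (A0.nu q)])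
  | subFailLow {A A' : SubNFA Sigma S} {q q' : S} {i j : ℕ}
      {M M1 : S × ℕ → Option ℕ} {s1 : List (AtRunElem S)} :
      M (q, i) = none → q ∉ A.F → A.T q = SubTrans.sub Kind.at A' q' →
      MemoAtRun A0 w A' A'.q0 i M M1 (.failure j) s1 →
      j ≤ A0.nu q →
      MemoAtRun A0 w A q i M (atRecord M1 q i (.failure j)) (.failure j)
        (.call q i :: s1 ++ [AtRunElem.fail j])

/-! ## The combined algorithm `Memo-(la,at)` -/

/-- Values of the memoization table of `Memo-(la,at)`: `Success` or `Failure(j)`. -/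
inductive LaAtVal : Type where
  | success : LaAtVal
  | failure : ℕ → LaAtVal

/-- Results of `Memo-(la,at)`: `SuccessAt(i', K)`, bare `Success`, or `Failure(j)`. -/
inductive LaAtResult (S : Type) : Type where
  | successAt : ℕ → Finset (S × ℕ) → LaAtResult S
  | success : LaAtResult S
  | failure : ℕ → LaAtResult S

def LaAtVal.toResult {S : Type} : LaAtVal → LaAtResult S
  | .success => .success
  | .failure j => .failure j

/-- `f`, converting results of `Memo-(la,at)` to results of `Match-(la,at)`
(undefined on the bare value `Success`). -/
def LaAtResult.toResult? {S : Type} : LaAtResult S → Option Result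
  | .successAt i _ => some (.successAt i)
  | .success => none
  | .failure _ => some .failure

def laAtFinal [DecidableEq S] (q : S) (i : ℕ) : LaAtResult S → LaAtResult S
  | .successAt i' K => .successAt i' (insert (q, i) K)
  | r => r

def laAtRecord [DecidableEq S] (M : S × ℕ → Option LaAtVal) (q : S) (i : ℕ) :
    LaAtResult S → (S × ℕ → Option LaAtVal)
  | .successAt _ _ => M
  | .success => fun p => if p = (q, i) then some LaAtVal.success else M p
  | .failure j => fun p => if p = (q, i) then some (LaAtVal.failure j) else M p

def laAtBatch [DecidableEq S] (M : S × ℕ → Option LaAtVal) (K : Finset (S × ℕ))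
    (v : LaAtVal) : S × ℕ → Option LaAtVal :=
  fun p => if p ∈ K then some v else M p

/-- Big-step semantics (with resulting memoization table and the number of recursive
calls made) of the combined memoized backtracking matching algorithm `Memo-(la,at)`:
`MemoLaAtRun w A0 A q i M M' r n` means the call `Memo-(la,at)^M_{A0,A,w}(q, i)`
terminates with result `r`, final memoization table `M'`, making `n` calls in total.
On a positive look-ahead transition, the sub-automaton becomes the new whole automaton
(so nesting depths of atomic grouping are reset by look-around operators). -/
inductive MemoLaAtRun [DecidableEq S] (w : List Sigma) :
    SubNFA Sigma S → SubNFA Sigma S → S → ℕ →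
    (S × ℕ → Option LaAtVal) → (S × ℕ → Option LaAtVal) → LaAtResult S → ℕ → Prop where
  | memoHit {A0 A : SubNFA Sigma S} {q : S} {i : ℕ} {M : S × ℕ → Option LaAtVal}
      {v : LaAtVal} :
      M (q, i) = some v →
      MemoLaAtRun w A0 A q i M M v.toResult 1
  | accept {A0 A : SubNFA Sigma S} {q : S} {i : ℕ} {M : S × ℕ → Option LaAtVal} :
      M (q, i) = none → q ∈ A.F →
      MemoLaAtRun w A0 A q i M M (.successAt i {(q, i)}) 1
  | eps {A0 A : SubNFA Sigma S} {q q' : S} {i : ℕ} {M M' : S × ℕ → Option LaAtVal}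
      {r : LaAtResult S} {n : ℕ} :
      M (q, i) = none → q ∉ A.F → A.T q = SubTrans.eps q' →
      MemoLaAtRun w A0 A q' i M M' r n →
      MemoLaAtRun w A0 A q i M (laAtRecord M' q i (laAtFinal q i r)) (laAtFinal q i r)
        (n + 1)
  | branchNoBT {A0 A : SubNFA Sigma S} {q q' q'' : S} {i : ℕ}
      {M M' : S × ℕ → Option LaAtVal} {r : LaAtResult S} {n : ℕ} :
      M (q, i) = none → q ∉ A.F → A.T q = SubTrans.branch q' q'' →
      MemoLaAtRun w A0 A q' i M M' r n →
      (∀ j, r = LaAtResult.failure j → j ≠ A0.nu q) →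
      MemoLaAtRun w A0 A q i M (laAtRecord M' q i (laAtFinal q i r)) (laAtFinal q i r)
        (n + 1)
  | branchBTFail {A0 A : SubNFA Sigma S} {q q' q'' : S} {i j' : ℕ}
      {M M1 M2 : S × ℕ → Option LaAtVal} {n1 n2 : ℕ} :
      M (q, i) = none → q ∉ A.F → A.T q = SubTrans.branch q' q'' →
      MemoLaAtRun w A0 A q' i M M1 (.failure (A0.nu q)) n1 →
      MemoLaAtRun w A0 A q'' i M1 M2 (.failure j') n2 →
      MemoLaAtRun w A0 A q i M
        (laAtRecord M2 q i (.failure (min (A0.nu q) j')))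
        (.failure (min (A0.nu q) j')) (n1 + n2 + 1)
  | branchBTOther {A0 A : SubNFA Sigma S} {q q' q'' : S} {i : ℕ}
      {M M1 M2 : S × ℕ → Option LaAtVal} {r : LaAtResult S} {n1 n2 : ℕ} :
      M (q, i) = none → q ∉ A.F → A.T q = SubTrans.branch q' q'' →
      MemoLaAtRun w A0 A q' i M M1 (.failure (A0.nu q)) n1 →
      MemoLaAtRun w A0 A q'' i M1 M2 r n2 →
      (∀ j, r ≠ LaAtResult.failure j) →
      MemoLaAtRun w A0 A q i M (laAtRecord M2 q i (laAtFinal q i r)) (laAtFinal q i r)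
        (n1 + n2 + 1)
  | charSucc {A0 A : SubNFA Sigma S} {q q' : S} {σ : Sigma} {i : ℕ}
      {M M' : S × ℕ → Option LaAtVal} {r : LaAtResult S} {n : ℕ} :
      M (q, i) = none → q ∉ A.F → A.T q = SubTrans.char σ q' →
      w[i]? = some σ →
      MemoLaAtRun w A0 A q' (i + 1) M M' r n →
      MemoLaAtRun w A0 A q i M (laAtRecord M' q i (laAtFinal q i r)) (laAtFinal q i r)
        (n + 1)
  | charFail {A0 A : SubNFA Sigma S} {q q' : S} {σ : Sigma} {i : ℕ}
      {M : S × ℕ → Option LaAtVal} :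
      M (q, i) = none → q ∉ A.F → A.T q = SubTrans.char σ q' →
      w[i]? ≠ some σ →
      MemoLaAtRun w A0 A q i M (laAtRecord M q i (.failure (A0.nu q)))
        (.failure (A0.nu q)) 1
  | plaSuccAt {A0 A A' : SubNFA Sigma S} {q q' : S} {i i' : ℕ} {K' : Finset (S × ℕ)}
      {M M1 M2 : S × ℕ → Option LaAtVal} {r : LaAtResult S} {n1 n2 : ℕ} :
      M (q, i) = none → q ∉ A.F → A.T q = SubTrans.sub Kind.pla A' q' →
      MemoLaAtRun w A' A' A'.q0 i M M1 (.successAt i' K') n1 →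
      MemoLaAtRun w A0 A q' i (laAtBatch M1 K' LaAtVal.success) M2 r n2 →
      MemoLaAtRun w A0 A q i M (laAtRecord M2 q i (laAtFinal q i r)) (laAtFinal q i r)
        (n1 + n2 + 1)
  | plaBare {A0 A A' : SubNFA Sigma S} {q q' : S} {i : ℕ}
      {M M1 M2 : S × ℕ → Option LaAtVal} {r : LaAtResult S} {n1 n2 : ℕ} :
      M (q, i) = none → q ∉ A.F → A.T q = SubTrans.sub Kind.pla A' q' →
      MemoLaAtRun w A' A' A'.q0 i M M1 .success n1 →
      MemoLaAtRun w A0 A q' i M1 M2 r n2 →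
      MemoLaAtRun w A0 A q i M (laAtRecord M2 q i (laAtFinal q i r)) (laAtFinal q i r)
        (n1 + n2 + 1)
  | plaFail {A0 A A' : SubNFA Sigma S} {q q' : S} {i j : ℕ}
      {M M1 : S × ℕ → Option LaAtVal} {n1 : ℕ} :
      M (q, i) = none → q ∉ A.F → A.T q = SubTrans.sub Kind.pla A' q' →
      MemoLaAtRun w A' A' A'.q0 i M M1 (.failure j) n1 →
      MemoLaAtRun w A0 A q i M (laAtRecord M1 q i (.failure (A0.nu q)))
        (.failure (A0.nu q)) (n1 + 1)
  | atSuccSucc {A0 A A' : SubNFA Sigma S} {q q' : S} {i i' i'' : ℕ}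
      {K' K'' : Finset (S × ℕ)} {M M1 M2 : S × ℕ → Option LaAtVal} {n1 n2 : ℕ} :
      M (q, i) = none → q ∉ A.F → A.T q = SubTrans.sub Kind.at A' q' →
      MemoLaAtRun w A0 A' A'.q0 i M M1 (.successAt i' K') n1 →
      MemoLaAtRun w A0 A q' i' M1 M2 (.successAt i'' K'') n2 →
      MemoLaAtRun w A0 A q i M M2
        (laAtFinal q i (.successAt i'' (K' ∪ K''))) (n1 + n2 + 1)
  | atSuccBare {A0 A A' : SubNFA Sigma S} {q q' : S} {i i' : ℕ} {K' : Finset (S × ℕ)}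
      {M M1 M2 : S × ℕ → Option LaAtVal} {n1 n2 : ℕ} :
      M (q, i) = none → q ∉ A.F → A.T q = SubTrans.sub Kind.at A' q' →
      MemoLaAtRun w A0 A' A'.q0 i M M1 (.successAt i' K') n1 →
      MemoLaAtRun w A0 A q' i' M1 M2 .success n2 →
      MemoLaAtRun w A0 A q i M
        (laAtRecord (laAtBatch M2 K' LaAtVal.success) q i .success) .success
        (n1 + n2 + 1)
  | atSuccFail {A0 A A' : SubNFA Sigma S} {q q' : S} {i i' j : ℕ} {K' : Finset (S × ℕ)}
      {M M1 M2 : S × ℕ → Option LaAtVal} {n1 n2 : ℕ} :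
      M (q, i) = none → q ∉ A.F → A.T q = SubTrans.sub Kind.at A' q' →
      MemoLaAtRun w A0 A' A'.q0 i M M1 (.successAt i' K') n1 →
      MemoLaAtRun w A0 A q' i' M1 M2 (.failure j) n2 →
      MemoLaAtRun w A0 A q i M
        (laAtRecord (laAtBatch M2 K' (LaAtVal.failure j)) q i (.failure j))
        (.failure j) (n1 + n2 + 1)
  | atBare {A0 A A' : SubNFA Sigma S} {q q' : S} {i : ℕ}
      {M M1 : S × ℕ → Option LaAtVal} {n1 : ℕ} :
      M (q, i) = none → q ∉ A.F → A.T q = SubTrans.sub Kind.at A' q' →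
      MemoLaAtRun w A0 A' A'.q0 i M M1 .success n1 →
      MemoLaAtRun w A0 A q i M (laAtRecord M1 q i .success) .success (n1 + 1)
  | atFailHigh {A0 A A' : SubNFA Sigma S} {q q' : S} {i j : ℕ}
      {M M1 : S × ℕ → Option LaAtVal} {n1 : ℕ} :
      M (q, i) = none → q ∉ A.F → A.T q = SubTrans.sub Kind.at A' q' →
      MemoLaAtRun w A0 A' A'.q0 i M M1 (.failure j) n1 →
      A0.nu q < j →
      MemoLaAtRun w A0 A q i M (laAtRecord M1 q i (.failure (A0.nu q)))
        (.failure (A0.nu q)) (n1 + 1)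
  | atFailLow {A0 A A' : SubNFA Sigma S} {q q' : S} {i j : ℕ}
      {M M1 : S × ℕ → Option LaAtVal} {n1 : ℕ} :
      M (q, i) = none → q ∉ A.F → A.T q = SubTrans.sub Kind.at A' q' →
      MemoLaAtRun w A0 A' A'.q0 i M M1 (.failure j) n1 →
      j ≤ A0.nu q →
      MemoLaAtRun w A0 A q i M (laAtRecord M1 q i (.failure j)) (.failure j) (n1 + 1)



/-- A memoization table is sound if each recorded failure is a failure of `Match`. -/
def MemoSound (A : NFA Sigma S) (w : List Sigma) (M : S × ℕ → Bool) : Prop :=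
  ∀ q i, M (q, i) = true → ∃ s, MatchRun A w q i .failure s

theorem matchRun_det {A : NFA Sigma S} {w : List Sigma} {q : S} {i : ℕ} {r : Result}
    {s : List (RunElem S)} (h : MatchRun A w q i r s) :
    ∀ {r' : Result} {s' : List (RunElem S)}, MatchRun A w q i r' s' → r = r' := by
  induction h with
  | accept hF => intro r' s' h'; cases h' <;> simp_all
  | eps hF hT _ ih =>
    intro r' s' h'
    cases h' <;> simp_all
    case eps h1 => exact ih h1
  | branchSucc hF hT _ ih =>
    intro r' s' h'
    cases h' <;> simp_all
    case branchSucc h1 => simpa using ih h1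
    case branchFail h1 h2 => simpa using ih h1
  | branchFail hF hT _ _ ih1 ih2 =>
    intro r' s' h'
    cases h' <;> simp_all
    case branchSucc h1 => simpa using ih1 h1
    case branchFail h1 h2 => exact ih2 h2
  | charSucc hF hT hw _ ih =>
    intro r' s' h'
    cases h' <;> simp_all
    case charSucc h1 => exact ih h1
  | charFail hF hT hw => intro r' s' h'; cases h' <;> simp_all

theorem memoSound_recFail [DecidableEq S] {A : NFA Sigma S} {w : List Sigma}
    {M : S × ℕ → Bool} {q : S} {i : ℕ} {r : Result} (hM : MemoSound A w M)
    (h : ∃ s, MatchRun A w q i r s) : MemoSound A w (recFail M q i r) := by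
  cases r with
  | successAt j => exact hM
  | failure =>
    intro p j hp
    by_cases he : (p, j) = (q, i)
    · cases he; exact h
    · simp only [recFail, if_neg he] at hp
      exact hM p j hp

theorem memoRun_sound [DecidableEq S] {A : NFA Sigma S} {w : List Sigma} {q : S} {i : ℕ}
    {M M' : S × ℕ → Bool} {r : Result} {s : List (RunElem S)}
    (h : MemoRun A w q i M M' r s) :
    MemoSound A w M → (∃ s, MatchRun A w q i r s) ∧ MemoSound A w M' := by
  induction h with
  | memoHit h => intro hM; exact ⟨hM _ _ h, hM⟩
  | accept _ hF => intro hM; exact ⟨⟨_, .accept hF⟩, hM⟩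
  | eps _ hF hT _ ih =>
    intro hM
    obtain ⟨⟨s, hs⟩, hM'⟩ := ih hM
    exact ⟨⟨_, .eps hF hT hs⟩, memoSound_recFail hM' ⟨_, .eps hF hT hs⟩⟩
  | branchSucc _ hF hT _ ih =>
    intro hM
    obtain ⟨⟨s, hs⟩, hM'⟩ := ih hM
    exact ⟨⟨_, .branchSucc hF hT hs⟩, hM'⟩
  | branchFail _ hF hT _ _ ih1 ih2 =>
    intro hM
    obtain ⟨⟨s, hs⟩, hM'⟩ := ih1 hM
    obtain ⟨⟨s', hs'⟩, hM''⟩ := ih2 hM'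
    exact ⟨⟨_, .branchFail hF hT hs hs'⟩,
      memoSound_recFail hM'' ⟨_, .branchFail hF hT hs hs'⟩⟩
  | charSucc _ hF hT hw _ ih =>
    intro hM
    obtain ⟨⟨s, hs⟩, hM'⟩ := ih hM
    exact ⟨⟨_, .charSucc hF hT hw hs⟩, memoSound_recFail hM' ⟨_, .charSucc hF hT hw hs⟩⟩
  | charFail _ hF hT hw =>
    intro hM
    exact ⟨⟨_, .charFail hF hT hw⟩, memoSound_recFail hM ⟨_, .charFail hF hT hw⟩⟩

theorem memoRun_of_hit [DecidableEq S] {A : NFA Sigma S} {w : List Sigma} {q : S} {i : ℕ}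
    {M : S × ℕ → Bool} {r : Result} {s : List (RunElem S)} (hM : MemoSound A w M)
    (h : MatchRun A w q i r s)
    (hmiss : M (q, i) = false → ∃ M' s, MemoRun A w q i M M' r s) :
    ∃ M' s, MemoRun A w q i M M' r s := by
  cases hq : M (q, i) with
  | false => exact hmiss hq
  | true =>
    obtain ⟨s', hs'⟩ := hM q i hq
    cases matchRun_det h hs'
    exact ⟨_, _, .memoHit hq⟩

theorem memoRun_complete [DecidableEq S] {A : NFA Sigma S} {w : List Sigma} {q : S} {i : ℕ}
    {r : Result} {s : List (RunElem S)} (h : MatchRun A w q i r s) :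
    ∀ M : S × ℕ → Bool, MemoSound A w M → ∃ M' s, MemoRun A w q i M M' r s := by
  induction h with
  | accept hF =>
    intro M hM
    exact memoRun_of_hit hM (.accept hF) fun hq => ⟨_, _, .accept hq hF⟩
  | eps hF hT h1 ih =>
    intro M hM
    refine memoRun_of_hit hM (.eps hF hT h1) fun hq => ?_
    obtain ⟨M', s', hs⟩ := ih M hM
    exact ⟨_, _, .eps hq hF hT hs⟩
  | branchSucc hF hT h1 ih =>
    intro M hM
    refine memoRun_of_hit hM (.branchSucc hF hT h1) fun hq => ?_
    obtain ⟨M', s', hs⟩ := ih M hM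
    exact ⟨_, _, .branchSucc hq hF hT hs⟩
  | branchFail hF hT h1 h2 ih1 ih2 =>
    intro M hM
    refine memoRun_of_hit hM (.branchFail hF hT h1 h2) fun hq => ?_
    obtain ⟨M', s', hs⟩ := ih1 M hM
    obtain ⟨M'', s'', hs'⟩ := ih2 M' (memoRun_sound hs hM).2
    exact ⟨_, _, .branchFail hq hF hT hs hs'⟩
  | charSucc hF hT hw h1 ih =>
    intro M hM
    refine memoRun_of_hit hM (.charSucc hF hT hw h1) fun hq => ?_
    obtain ⟨M', s', hs⟩ := ih M hM
    exact ⟨_, _, .charSucc hq hF hT hw hs⟩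
  | charFail hF hT hw =>
    intro M hM
    exact memoRun_of_hit hM (.charFail hF hT hw) fun hq => ⟨_, _, .charFail hq hF hT hw⟩

/-- **Theorem 2** (correctness of memoized backtracking matching):
for every NFA `A` without ε-loops, every input string `w`, and every starting position
`i ∈ {0, …, |w|}`, the memoized algorithm returns the same result as the original
backtracking algorithm: `Match_{A,w}(q0, i) = Memo^{M0}_{A,w}(q0, i)`. -/
theorem memo_correct {Sigma S : Type} [Fintype S] [DecidableEq S]
    (A : NFA Sigma S) (hLoop : A.NoEpsLoops)
    (w : List Sigma) (i : ℕ) (hi : i ≤ w.length) :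
    ∀ r : Result,
      (∃ s, MatchRun A w A.q0 i r s) ↔
        (∃ M' s, MemoRun A w A.q0 i (fun _ => false) M' r s) := by
  intro r
  have h0 : MemoSound A w (fun _ => false) := fun _ _ h => by simp at h
  constructor
  · rintro ⟨s, hs⟩
    exact memoRun_complete hs _ h0
  · rintro ⟨M', s, hs⟩
    exact (memoRun_sound hs h0).1

end RegexMemo
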